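/- arXiv:2211.00268 — 3 statements merged into one kernel-verified Lean document; each statement's English description precedes it below -/
import Mathlib

section
/- Let beta, c1, alpha, nu, d, xi0 > 0 with alpha >= beta*nu/d, let T >= 2 be an integer, let 0 < epsilon < 1, let L >= 1 be an integer, and suppose c1*xi_L^alpha > (1/2)*T^{-alpha}*epsilon. Then sum_{l=1}^{L} xi_l^{-beta} < 2^{beta/alpha} * c1^{beta/alpha} * T^{beta} * (1 - T^{-beta})^{-1} * epsilon^{-d/nu}. -/
/-
The costs `ξ_l ^ (-β)` form a geometric progression in `l`, so their sum is at most the cost of the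
finest level `L` times `∑ k, (T ^ (-β)) ^ k = (1 - T ^ (-β))⁻¹`. The lower bound on `ξ_L ^ α`,
raised to the power `-(β / α)`, bounds that finest cost by a constant times `ε ^ (-(β / α))`, and
`ε ^ (-(β / α)) ≤ ε ^ (-(d / ν))` because `ε ≤ 1` and `β / α ≤ d / ν`.
-/

lemma sum_Icc_zpow_sub_le_inv_one_sub {K : Type*} [Field K] [LinearOrder K] [IsStrictOrderedRing K]
    {r : K} (hr₀ : 0 ≤ r) (hr₁ : r < 1) (m n : ℤ) :
    ∑ l ∈ Finset.Icc m n, r ^ (n - l) ≤ (1 - r)⁻¹ := by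
  have reindex : ∑ l ∈ Finset.Icc m n, r ^ (n - l) =
      ∑ k ∈ Finset.range (n + 1 - m).toNat, r ^ k := by
    refine Finset.sum_nbij' (fun l ↦ (n - l).toNat) (fun k ↦ n - k) ?_ ?_ ?_ ?_ ?_ <;>
      simp only [Finset.mem_Icc, Finset.mem_range]
    iterate 4 lia
    intro l hl
    rw [← zpow_natCast, Int.toNat_of_nonneg (sub_nonneg.mpr hl.2)]
  rw [reindex, Finset.range_eq_Ico]
  simpa only [pow_zero, one_div] using
    geom_sum_Ico_le_of_lt_one (m := 0) (n := (n + 1 - m).toNat) hr₀ hr₁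

lemma rpow_neg_lt_div_rpow_of_lt_mul_rpow {a b c δ x : ℝ} (ha : 0 < a) (hb : 0 < b) (hc : 0 < c)
    (hδ : 0 < δ) (hx : 0 < x) (h : δ < c * x ^ a) : x ^ (-b) < (c / δ) ^ (b / a) := by
  have hδc : δ / c < x ^ a := (div_lt_iff₀' hc).mpr h
  calc x ^ (-b) = (x ^ a) ^ (-(b / a)) := by
        rw [← Real.rpow_mul hx.le, mul_neg, mul_div_cancel₀ b ha.ne']
    _ < (δ / c) ^ (-(b / a)) :=
        Real.rpow_lt_rpow_of_neg (by positivity) hδc (neg_lt_zero.mpr (by positivity))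
    _ = (c / δ) ^ (b / a) := by
        rw [Real.rpow_neg_eq_inv_rpow, inv_div]

/-- The fidelity parameter `ξ_l = ξ₀ T ^ (-l)` of level `l`. The exponent is cast to `ℝ`, so that
the power is the real power. -/
noncomputable def fidelity (ξ₀ T : ℝ) (l : ℤ) : ℝ := ξ₀ * T ^ (-(l : ℝ))

namespace fidelity

variable {ξ₀ T α β c ε : ℝ}

lemma pos (hξ₀ : 0 < ξ₀) (hT : 0 < T) (l : ℤ) : 0 < fidelity ξ₀ T l :=
  mul_pos hξ₀ (Real.rpow_pos_of_pos hT _)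

lemma eq_mul_rpow_sub (hT : 0 < T) (l n : ℤ) :
    fidelity ξ₀ T l = fidelity ξ₀ T n * T ^ ((n - l : ℤ) : ℝ) := by
  rw [fidelity, fidelity, mul_assoc, ← Real.rpow_add hT]
  congr 2
  push_cast
  ring

lemma rpow_neg_eq_mul_zpow (hξ₀ : 0 < ξ₀) (hT : 0 < T) (l n : ℤ) :
    fidelity ξ₀ T l ^ (-β) = fidelity ξ₀ T n ^ (-β) * (T ^ (-β)) ^ (n - l) := by
  rw [eq_mul_rpow_sub hT l n, Real.mul_rpow (pos hξ₀ hT n).le (by positivity),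
    ← Real.rpow_mul hT.le, mul_comm _ (-β), Real.rpow_mul hT.le, Real.rpow_intCast]

lemma sum_rpow_neg_le (hξ₀ : 0 < ξ₀) (hT : 1 < T) (hβ : 0 < β) (m n : ℤ) :
    ∑ l ∈ Finset.Icc m n, fidelity ξ₀ T l ^ (-β) ≤
      fidelity ξ₀ T n ^ (-β) * (1 - T ^ (-β))⁻¹ := by
  have hT₀ : 0 < T := one_pos.trans hT
  have hr : T ^ (-β) < 1 := Real.rpow_lt_one_of_one_lt_of_neg hT (neg_lt_zero.mpr hβ)
  calc ∑ l ∈ Finset.Icc m n, fidelity ξ₀ T l ^ (-β)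
      = fidelity ξ₀ T n ^ (-β) * ∑ l ∈ Finset.Icc m n, (T ^ (-β)) ^ (n - l) := by
        rw [Finset.mul_sum]
        exact Finset.sum_congr rfl fun l _ ↦ rpow_neg_eq_mul_zpow hξ₀ hT₀ l n
    _ ≤ fidelity ξ₀ T n ^ (-β) * (1 - T ^ (-β))⁻¹ :=
        mul_le_mul_of_nonneg_left (sum_Icc_zpow_sub_le_inv_one_sub (by positivity) hr m n)
          (Real.rpow_nonneg (pos hξ₀ hT₀ n).le _)

lemma rpow_neg_lt_of_lt_mul_rpow (hξ₀ : 0 < ξ₀) (hT : 0 < T) (hα : 0 < α) (hβ : 0 < β) (hc : 0 < c)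
    (hε : 0 < ε) {n : ℤ} (h : 1 / 2 * T ^ (-α) * ε < c * fidelity ξ₀ T n ^ α) :
    fidelity ξ₀ T n ^ (-β) < 2 ^ (β / α) * c ^ (β / α) * T ^ β * ε ^ (-(β / α)) := by
  have hratio : c / (1 / 2 * T ^ (-α) * ε) = 2 * c * T ^ α * ε⁻¹ := by
    rw [Real.rpow_neg hT.le]
    field_simp
  calc fidelity ξ₀ T n ^ (-β) < (c / (1 / 2 * T ^ (-α) * ε)) ^ (β / α) :=
        rpow_neg_lt_div_rpow_of_lt_mul_rpow hα hβ hc (by positivity) (pos hξ₀ hT n) h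
    _ = (2 * c * T ^ α * ε⁻¹) ^ (β / α) := by rw [hratio]
    _ = 2 ^ (β / α) * c ^ (β / α) * (T ^ α) ^ (β / α) * ε⁻¹ ^ (β / α) := by
        rw [Real.mul_rpow (by positivity) (by positivity),
          Real.mul_rpow (by positivity) (by positivity), Real.mul_rpow zero_le_two hc.le]
    _ = 2 ^ (β / α) * c ^ (β / α) * T ^ β * ε ^ (-(β / α)) := by
        rw [← Real.rpow_mul hT.le, mul_div_cancel₀ β hα.ne', Real.rpow_neg_eq_inv_rpow]

end fidelity

theorem stmt4_general {β c α ν d ξ₀ ε T : ℝ} (hβ : 0 < β) (hc : 0 < c) (hα : 0 < α) (hν : 0 < ν)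
    (hd : 0 < d) (hξ₀ : 0 < ξ₀) (hαβ : β * ν / d ≤ α) (hT : 1 < T) (hε₀ : 0 < ε) (hε₁ : ε ≤ 1)
    (m L : ℤ) (h : 1 / 2 * T ^ (-α) * ε < c * fidelity ξ₀ T L ^ α) :
    ∑ l ∈ Finset.Icc m L, fidelity ξ₀ T l ^ (-β) <
      2 ^ (β / α) * c ^ (β / α) * T ^ β * (1 - T ^ (-β))⁻¹ * ε ^ (-(d / ν)) := by
  have hT₀ : 0 < T := one_pos.trans hT
  have hgap : 0 < 1 - T ^ (-β) :=
    sub_pos.mpr (Real.rpow_lt_one_of_one_lt_of_neg hT (neg_lt_zero.mpr hβ))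
  have hexp : β / α ≤ d / ν := by
    rw [div_le_div_iff₀ hα hν, mul_comm d α]
    exact (div_le_iff₀ hd).mp hαβ
  calc ∑ l ∈ Finset.Icc m L, fidelity ξ₀ T l ^ (-β)
      ≤ fidelity ξ₀ T L ^ (-β) * (1 - T ^ (-β))⁻¹ := fidelity.sum_rpow_neg_le hξ₀ hT hβ m L
    _ < 2 ^ (β / α) * c ^ (β / α) * T ^ β * ε ^ (-(β / α)) * (1 - T ^ (-β))⁻¹ :=
        mul_lt_mul_of_pos_right (fidelity.rpow_neg_lt_of_lt_mul_rpow hξ₀ hT₀ hα hβ hc hε₀ h)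
          (inv_pos.mpr hgap)
    _ = 2 ^ (β / α) * c ^ (β / α) * T ^ β * (1 - T ^ (-β))⁻¹ * ε ^ (-(β / α)) := by ring
    _ ≤ 2 ^ (β / α) * c ^ (β / α) * T ^ β * (1 - T ^ (-β))⁻¹ * ε ^ (-(d / ν)) :=
        mul_le_mul_of_nonneg_left
          (Real.rpow_le_rpow_of_exponent_ge hε₀ hε₁ (neg_le_neg hexp)) (by positivity)

/-- With `ξ_l = ξ0 T^{-l}` and `c1 ξ_L^α > (1/2) T^{-α} ε`, the sum
`∑_{l=1}^L ξ_l^{-β}` is bounded by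
`2^{β/α} c1^{β/α} T^β (1 - T^{-β})⁻¹ ε^{-d/ν}`. -/
theorem stmt4 (beta c1 alpha nu d xi0 eps : ℝ) (T L : ℤ)
    (hb : 0 < beta) (hc1 : 0 < c1) (ha : 0 < alpha) (hnu : 0 < nu) (hd : 0 < d)
    (hxi0 : 0 < xi0) (hab : alpha ≥ beta * nu / d)
    (hT : 2 ≤ T) (heps0 : 0 < eps) (heps1 : eps < 1) (hL : 1 ≤ L)
    (h : c1 * (xi0 * (T : ℝ) ^ (-(L : ℝ))) ^ alpha > (1 / 2) * (T : ℝ) ^ (-alpha) * eps) :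
    ∑ l ∈ Finset.Icc (1 : ℤ) L, (xi0 * (T : ℝ) ^ (-(l : ℝ))) ^ (-beta)
      < (2 : ℝ) ^ (beta / alpha) * c1 ^ (beta / alpha) * (T : ℝ) ^ beta *
        (1 - (T : ℝ) ^ (-beta))⁻¹ * eps ^ (-(d / nu)) := by
  exact stmt4_general hb hc1 ha hnu hd hxi0 hab (by exact_mod_cast one_lt_two.trans_le hT) heps0
    heps1.le 1 L h
end

section
/- Let alpha, beta, nu, d, c1, c4, c12 > 0 with alpha*d >= 2*beta*nu, let epsilon > 0, and let xi_H > 0 satisfy (epsilon/2)^{1 + alpha*d/(2*beta*nu)} <= c1 * xi_H^{alpha} <= epsilon/2. Set n_H = ceil( (2*epsilon^{-1}*c12*xi_H^{alpha/2})^{d/nu} ). Then c4 * n_H * xi_H^{-beta} <= c16 * epsilon^{-beta/alpha - d/(2*nu)}, where c16 = c4*(2*c12)^{d/nu}*(2*c1)^{beta/alpha - d/(2*nu)} + c4*c1^{beta/alpha}*2^{beta/alpha + d/(2*nu)}. -/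
/-!
Since `⌈S⌉ ≤ S + 1`, the cost is at most that of `S = (2 ε⁻¹ c12 ξ^(α/2))^(d/ν)` runs plus that of
one extra run. The first part is a constant times `ε^(-d/ν) (ξ^α)^(d/(2ν) - β/α)`, whose last
exponent is nonnegative because `α d ≥ 2 β ν`, so the upper bound `c1 ξ^α ≤ ε/2` controls it. The
second part is `c4 (ξ^α)^(-β/α)`, controlled by the lower bound on `c1 ξ^α`: raising it to the power
`β/α` turns the exponent `1 + α d / (2 β ν)` into `β/α + d/(2ν)`, the rate of the first part.
-/

section RpowBounds

variable {a c e x y α β p s t : ℝ}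

lemma rpow_eq_rpow_rpow_div (hα : α ≠ 0) (hx : 0 ≤ x) : x ^ β = (x ^ α) ^ (β / α) := by
  rw [← Real.rpow_mul hx, mul_div_cancel₀ β hα]

lemma rpow_le_rpow_neg_mul_rpow_of_mul_le (hc : 0 < c) (hx : 0 ≤ x) (hs : 0 ≤ s)
    (h : c * x ≤ y) : x ^ s ≤ c ^ (-s) * y ^ s := by
  have hpow : c ^ s * x ^ s ≤ y ^ s := by
    rw [← Real.mul_rpow hc.le hx]
    exact Real.rpow_le_rpow (by positivity) h hs
  rwa [Real.rpow_neg hc.le, le_inv_mul_iff₀ (by positivity)]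

lemma rpow_neg_le_rpow_mul_rpow_neg_of_le_mul (hc : 0 < c) (hx : 0 < x) (hy : 0 < y)
    (hs : 0 ≤ s) (h : y ≤ c * x) : x ^ (-s) ≤ c ^ s * y ^ (-s) := by
  have hpow : c ^ (-s) * x ^ (-s) ≤ y ^ (-s) := by
    rw [← Real.mul_rpow hc.le hx.le]
    exact Real.rpow_le_rpow_of_nonpos hy h (neg_nonpos.mpr hs)
  rwa [Real.rpow_neg hc.le, inv_mul_le_iff₀ (by positivity)] at hpow

lemma mul_inv_mul_rpow_half_rpow_two_mul (ha : 0 ≤ a) (he : 0 ≤ e) (hx : 0 ≤ x) :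
    (a * e⁻¹ * x ^ (α / 2)) ^ (2 * p) = a ^ (2 * p) * e ^ (-(2 * p)) * (x ^ α) ^ p := by
  rw [Real.mul_rpow (by positivity) (by positivity), Real.mul_rpow ha (by positivity),
    Real.inv_rpow he, ← Real.rpow_neg he, ← Real.rpow_mul hx, ← Real.rpow_mul hx]
  ring_nf

lemma mul_inv_mul_rpow_half_rpow_mul_rpow_neg_le (ha : 0 ≤ a) (hc : 0 < c) (he : 0 < e)
    (hx : 0 < x) (hα : α ≠ 0) (hp : β / α ≤ p) (h : c * x ^ α ≤ e) :
    (a * e⁻¹ * x ^ (α / 2)) ^ (2 * p) * x ^ (-β) ≤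
      a ^ (2 * p) * c ^ (β / α - p) * e ^ (-(β / α) - p) := by
  have hX : 0 < x ^ α := Real.rpow_pos_of_pos hx α
  calc (a * e⁻¹ * x ^ (α / 2)) ^ (2 * p) * x ^ (-β)
      = a ^ (2 * p) * e ^ (-(2 * p)) * (x ^ α) ^ (p - β / α) := by
        rw [mul_inv_mul_rpow_half_rpow_two_mul ha he.le hx.le,
          rpow_eq_rpow_rpow_div (β := -β) hα hx.le, neg_div, mul_assoc, ← Real.rpow_add hX,
          ← sub_eq_add_neg]
    _ ≤ a ^ (2 * p) * e ^ (-(2 * p)) * (c ^ (-(p - β / α)) * e ^ (p - β / α)) := by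
        gcongr
        exact rpow_le_rpow_neg_mul_rpow_of_mul_le hc hX.le (sub_nonneg.mpr hp) h
    _ = a ^ (2 * p) * c ^ (β / α - p) * (e ^ (-(2 * p)) * e ^ (p - β / α)) := by
        rw [neg_sub]; ring
    _ = a ^ (2 * p) * c ^ (β / α - p) * e ^ (-(β / α) - p) := by
        rw [← Real.rpow_add he]; ring_nf

lemma rpow_neg_le_of_rpow_le_mul_rpow (hc : 0 < c) (hx : 0 < x) (hy : 0 < y) (hα : α ≠ 0)
    (hβ : 0 ≤ β / α) (h : y ^ t ≤ c * x ^ α) :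
    x ^ (-β) ≤ c ^ (β / α) * y ^ (-(t * (β / α))) := by
  rw [rpow_eq_rpow_rpow_div hα hx.le, neg_div, ← mul_neg, Real.rpow_mul hy.le]
  exact rpow_neg_le_rpow_mul_rpow_neg_of_le_mul hc (by positivity) (by positivity) hβ h

lemma div_rpow_neg (he : 0 ≤ e) (ha : 0 ≤ a) : (e / a) ^ (-s) = a ^ s * e ^ (-s) := by
  rw [Real.div_rpow he ha, Real.rpow_neg ha, div_inv_eq_mul, mul_comm]

end RpowBounds

lemma mul_ceil_mul_le {k s x : ℝ} (hk : 0 ≤ k) (hx : 0 ≤ x) :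
    k * (⌈s⌉ : ℝ) * x ≤ k * (s * x + x) := by
  rw [mul_assoc, ← add_one_mul]
  gcongr
  exact (Int.ceil_lt_add_one s).le

/-- Total cost bound for the single high-fidelity RKHS
interpolator: with `n_H = ⌈(2 ε⁻¹ c12 ξ_H^{α/2})^{d/ν}⌉` and the sandwich
condition on `ξ_H`, one has `c4 n_H ξ_H^{-β} ≤ c16 ε^{-β/α - d/(2ν)}`. -/
theorem stmt15 (alpha beta nu d c1 c4 c12 eps xiH : ℝ) (nH : ℤ)
    (ha : 0 < alpha) (hb : 0 < beta) (hnu : 0 < nu) (hd : 0 < d)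
    (hc1 : 0 < c1) (hc4 : 0 < c4) (hc12 : 0 < c12)
    (hge : alpha * d ≥ 2 * beta * nu)
    (heps : 0 < eps) (hxiH : 0 < xiH)
    (hlow : (eps / 2) ^ (1 + alpha * d / (2 * beta * nu)) ≤ c1 * xiH ^ alpha)
    (hhigh : c1 * xiH ^ alpha ≤ eps / 2)
    (hnH : nH = ⌈(2 * eps⁻¹ * c12 * xiH ^ (alpha / 2)) ^ (d / nu)⌉)
    (c16 : ℝ)
    (hc16 : c16 = c4 * (2 * c12) ^ (d / nu) * (2 * c1) ^ (beta / alpha - d / (2 * nu)) +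
      c4 * c1 ^ (beta / alpha) * (2 : ℝ) ^ (beta / alpha + d / (2 * nu))) :
    c4 * (nH : ℝ) * xiH ^ (-beta) ≤ c16 * eps ^ (-(beta / alpha) - d / (2 * nu)) := by
  have hratio : d / nu = 2 * (d / (2 * nu)) := by field_simp
  have hrate : (1 + alpha * d / (2 * beta * nu)) * (beta / alpha) =
      beta / alpha + d / (2 * nu) := by field_simp
  have hexp : beta / alpha ≤ d / (2 * nu) := by
    rw [div_le_div_iff₀ ha (by positivity)]
    linarith
  have hsamples : (2 * eps⁻¹ * c12 * xiH ^ (alpha / 2)) ^ (d / nu) * xiH ^ (-beta) ≤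
      (2 * c12) ^ (d / nu) * (2 * c1) ^ (beta / alpha - d / (2 * nu)) *
        eps ^ (-(beta / alpha) - d / (2 * nu)) := by
    rw [hratio, mul_right_comm 2 eps⁻¹ c12]
    exact mul_inv_mul_rpow_half_rpow_mul_rpow_neg_le (by positivity) (by positivity) heps hxiH
      ha.ne' hexp (by linarith)
  have hextra : xiH ^ (-beta) ≤ c1 ^ (beta / alpha) * (2 ^ (beta / alpha + d / (2 * nu)) *
      eps ^ (-(beta / alpha) - d / (2 * nu))) := by
    rw [← neg_add', ← div_rpow_neg heps.le zero_le_two, ← hrate]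
    exact rpow_neg_le_of_rpow_le_mul_rpow hc1 hxiH (half_pos heps) ha.ne' (by positivity) hlow
  calc c4 * (nH : ℝ) * xiH ^ (-beta)
      ≤ c4 * ((2 * eps⁻¹ * c12 * xiH ^ (alpha / 2)) ^ (d / nu) * xiH ^ (-beta) +
          xiH ^ (-beta)) := hnH ▸ mul_ceil_mul_le hc4.le (by positivity)
    _ ≤ c4 * ((2 * c12) ^ (d / nu) * (2 * c1) ^ (beta / alpha - d / (2 * nu)) *
            eps ^ (-(beta / alpha) - d / (2 * nu)) +
          c1 ^ (beta / alpha) * (2 ^ (beta / alpha + d / (2 * nu)) *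
            eps ^ (-(beta / alpha) - d / (2 * nu)))) := by gcongr
    _ = c16 * eps ^ (-(beta / alpha) - d / (2 * nu)) := by
        rw [hc16]
        ring
end

section
/- Let L be a positive integer, let a_1, ..., a_L and C_1, ..., C_L be positive reals, let gamma > 0, and let B > 0. Define mu = B / ( sum_{k=1}^{L} C_k * (a_k/C_k)^{1/(gamma+1)} ) and n_l* = mu * (a_l/C_l)^{1/(gamma+1)} for l = 1, ..., L. Then sum_{l=1}^{L} C_l * n_l* = B, and for any positive reals m_1, ..., m_L with sum_{l=1}^{L} C_l * m_l <= B, we have sum_{l=1}^{L} a_l * (n_l*)^{-gamma} <= sum_{l=1}^{L} a_l * m_l^{-gamma}. -/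
/-!
The function `x ↦ x ^ (-γ)` is convex on the positive reals, so each loss `a_l x ^ (-γ)` lies above
its tangent line at `n_l*`. The exponent `1 / (γ + 1)` is the one for which these tangents have
slopes `-γ μ ^ (-(γ + 1)) C_l`, proportional to the prices `C_l`. Adding the tangent inequalities,
the loss can drop below its value at `n*` by at most the Lagrange multiplier `γ μ ^ (-(γ + 1))`
times the increase in total cost, and `n*` already spends the whole budget.
-/

section Lagrangian

variable {ι α : Type*} {s : Finset ι}

theorem sum_le_sum_of_lagrangian_le {f g : ι → α → ℝ} {x y : ι → α} {lam : ℝ} (hlam : 0 ≤ lam)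
    (hfg : ∀ i ∈ s, f i (x i) + lam * g i (x i) ≤ f i (y i) + lam * g i (y i))
    (hg : ∑ i ∈ s, g i (y i) ≤ ∑ i ∈ s, g i (x i)) :
    ∑ i ∈ s, f i (x i) ≤ ∑ i ∈ s, f i (y i) := by
  have hsum := Finset.sum_le_sum hfg
  simp only [Finset.sum_add_distrib, ← Finset.mul_sum] at hsum
  have hcost := mul_le_mul_of_nonneg_left hg hlam
  linarith

end Lagrangian

section PowerLoss

variable {p x y : ℝ}

theorem one_sub_mul_sub_one_le_rpow_neg (hp : 0 ≤ p) (hx : 0 < x) :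
    1 - p * (x - 1) ≤ x ^ (-p) := by
  have hlog : p * Real.log x ≤ p * (x - 1) :=
    mul_le_mul_of_nonneg_left (Real.log_le_sub_one_of_pos hx) hp
  calc 1 - p * (x - 1) ≤ Real.log x * -p + 1 := by linarith
    _ ≤ Real.exp (Real.log x * -p) := Real.add_one_le_exp _
    _ = x ^ (-p) := (Real.rpow_def_of_pos hx _).symm

theorem rpow_neg_sub_mul_sub_le_rpow_neg (hp : 0 ≤ p) (hx : 0 < x) (hy : 0 < y) :
    x ^ (-p) - p * x ^ (-(p + 1)) * (y - x) ≤ y ^ (-p) := by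
  have hpow : x ^ (-(p + 1)) = x ^ (-p) / x := by
    rw [neg_add', Real.rpow_sub_one hx.ne']
  calc x ^ (-p) - p * x ^ (-(p + 1)) * (y - x) = x ^ (-p) * (1 - p * (y / x - 1)) := by
        rw [hpow]
        field_simp
    _ ≤ x ^ (-p) * (y / x) ^ (-p) := by
        gcongr
        exact one_sub_mul_sub_one_le_rpow_neg hp (div_pos hy hx)
    _ = y ^ (-p) := by
        rw [← Real.mul_rpow hx.le (div_pos hy hx).le, mul_div_cancel₀ _ hx.ne']

theorem mul_rpow_neg_mul_div_rpow_one_div {q a c mu : ℝ} (hq : q ≠ 0) (ha : 0 < a) (hc : 0 ≤ c)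
    (hmu : 0 ≤ mu) : a * (mu * (a / c) ^ (1 / q)) ^ (-q) = mu ^ (-q) * c := by
  have hac : 0 ≤ a / c := div_nonneg ha.le hc
  have hroot : ((a / c) ^ (1 / q)) ^ (-q) = c / a := by
    rw [one_div, Real.rpow_neg (Real.rpow_nonneg hac _), Real.rpow_inv_rpow hac hq, inv_div]
  rw [Real.mul_rpow hmu (Real.rpow_nonneg hac _), hroot]
  field_simp

end PowerLoss

section Allocation

variable {ι : Type*} {s : Finset ι}

theorem sum_mul_div_sum_mul {C w : ι → ℝ} (B : ℝ) (hw : ∑ i ∈ s, C i * w i ≠ 0) :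
    ∑ i ∈ s, C i * (B / (∑ k ∈ s, C k * w k) * w i) = B := by
  simp only [mul_left_comm (C _), ← Finset.mul_sum, div_mul_cancel₀ B hw]

theorem sum_mul_rpow_neg_le_of_stationary {a C n m : ι → ℝ} {p lam : ℝ} (hp : 0 ≤ p)
    (hlam : 0 ≤ lam) (ha : ∀ i ∈ s, 0 ≤ a i) (hn : ∀ i ∈ s, 0 < n i) (hm : ∀ i ∈ s, 0 < m i)
    (hstat : ∀ i ∈ s, a i * n i ^ (-(p + 1)) = lam * C i)
    (hcost : ∑ i ∈ s, C i * m i ≤ ∑ i ∈ s, C i * n i) :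
    ∑ i ∈ s, a i * n i ^ (-p) ≤ ∑ i ∈ s, a i * m i ^ (-p) := by
  refine sum_le_sum_of_lagrangian_le (f := fun i t ↦ a i * t ^ (-p)) (g := fun i t ↦ C i * t)
    (mul_nonneg hp hlam) (fun i hi ↦ ?_) hcost
  have htangent := mul_le_mul_of_nonneg_left
    (rpow_neg_sub_mul_sub_le_rpow_neg hp (hn i hi) (hm i hi)) (ha i hi)
  linear_combination htangent + p * (m i - n i) * hstat i hi

theorem stmt17_general (hs : s.Nonempty) {a C : ι → ℝ} {gamma B : ℝ}
    (ha : ∀ i ∈ s, 0 < a i) (hC : ∀ i ∈ s, 0 < C i) (hg : 0 ≤ gamma) (hB : 0 < B) {mu : ℝ}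
    (hmu : mu = B / ∑ k ∈ s, C k * (a k / C k) ^ (1 / (gamma + 1))) {nstar : ι → ℝ}
    (hn : ∀ i ∈ s, nstar i = mu * (a i / C i) ^ (1 / (gamma + 1))) :
    (∑ i ∈ s, C i * nstar i = B) ∧
    ∀ m : ι → ℝ, (∀ i ∈ s, 0 < m i) → (∑ i ∈ s, C i * m i ≤ B) →
      ∑ i ∈ s, a i * (nstar i) ^ (-gamma) ≤ ∑ i ∈ s, a i * (m i) ^ (-gamma) := by
  have hw : ∀ i ∈ s, 0 < (a i / C i) ^ (1 / (gamma + 1)) := fun i hi ↦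
    Real.rpow_pos_of_pos (div_pos (ha i hi) (hC i hi)) _
  have hS : 0 < ∑ k ∈ s, C k * (a k / C k) ^ (1 / (gamma + 1)) :=
    Finset.sum_pos (fun i hi ↦ mul_pos (hC i hi) (hw i hi)) hs
  have hmu_pos : 0 < mu := hmu ▸ div_pos hB hS
  have hn_pos : ∀ i ∈ s, 0 < nstar i := fun i hi ↦ hn i hi ▸ mul_pos hmu_pos (hw i hi)
  have hbudget : ∑ i ∈ s, C i * nstar i = B := by
    rw [Finset.sum_congr rfl fun i hi ↦ congrArg (C i * ·) (hn i hi), hmu]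
    exact sum_mul_div_sum_mul B hS.ne'
  have hstat : ∀ i ∈ s, a i * nstar i ^ (-(gamma + 1)) = mu ^ (-(gamma + 1)) * C i := by
    intro i hi
    rw [hn i hi]
    exact mul_rpow_neg_mul_div_rpow_one_div (by positivity) (ha i hi) (hC i hi).le hmu_pos.le
  exact ⟨hbudget, fun m hm hmB ↦ sum_mul_rpow_neg_le_of_stationary hg
    (Real.rpow_nonneg hmu_pos.le _) (fun i hi ↦ (ha i hi).le) hn_pos hm hstat
    (hmB.trans_eq hbudget.symm)⟩

end Allocation

/-- Optimal sample-size allocation by Lagrange multipliers: with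
`μ = B / ∑_k C_k (a_k/C_k)^{1/(γ+1)}` and `n_l* = μ (a_l/C_l)^{1/(γ+1)}`, the
budget is exactly exhausted, `∑_l C_l n_l* = B`, and `n*` minimizes
`∑_l a_l n_l^{-γ}` among all positive allocations with `∑_l C_l m_l ≤ B`. -/
theorem stmt17 (L : ℕ) (hL : 0 < L) (a C : ℕ → ℝ) (gamma B : ℝ)
    (ha : ∀ l ∈ Finset.Icc 1 L, 0 < a l) (hC : ∀ l ∈ Finset.Icc 1 L, 0 < C l)
    (hg : 0 < gamma) (hB : 0 < B)
    (mu : ℝ)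
    (hmu : mu = B / ∑ k ∈ Finset.Icc 1 L, C k * (a k / C k) ^ (1 / (gamma + 1)))
    (nstar : ℕ → ℝ)
    (hn : ∀ l ∈ Finset.Icc 1 L, nstar l = mu * (a l / C l) ^ (1 / (gamma + 1))) :
    (∑ l ∈ Finset.Icc 1 L, C l * nstar l = B) ∧
    ∀ m : ℕ → ℝ, (∀ l ∈ Finset.Icc 1 L, 0 < m l) →
      (∑ l ∈ Finset.Icc 1 L, C l * m l ≤ B) →
      ∑ l ∈ Finset.Icc 1 L, a l * (nstar l) ^ (-gamma) ≤
        ∑ l ∈ Finset.Icc 1 L, a l * (m l) ^ (-gamma) :=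
  stmt17_general (Finset.nonempty_Icc.mpr hL) ha hC hg.le hB hmu hn
end
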